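/- Let D be a non-trivial 2-(v,k,λ) design, let G be a flag-transitive group of automorphisms of D, and let α be a point of D. Then |G_α|³ > λ·|G|. -/

import Mathlib

/-!
Let `r` be the number of blocks through a point. The stabilizer `G_α` is transitive on the `r`
blocks through `α`, so `r ≤ |G_α|`; and `|G| ≤ v |G_α|` by orbit-stabilizer. It therefore
suffices that `λ v < r²`. Counting gives `r (k - 1) = λ (v - 1)`, hence `λ < r` because `k < v`.
Fisher's inequality `v ≤ b` together with `b k = v r` gives `k ≤ r`, so
`r² ≥ r k = λ (v - 1) + r > λ v`.
Fisher's inequality is proved by showing that summing a rational point weighting over each block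
is an injective linear map from weightings of points to weightings of blocks
(`TwoDesign.card_points_le_card_blocks`).
-/

/-- A 2-(v,k,λ) design on a finite point set `P`: a collection of `k`-element
subsets of `P` (blocks) such that every pair of distinct points lies in exactly
`lam` blocks (with `lam ≥ 1`). -/
structure TwoDesign (P : Type*) [Fintype P] [DecidableEq P] (v k lam : ℕ) where
  blocks : Finset (Finset P)
  card_points : Fintype.card P = v
  block_card : ∀ B ∈ blocks, B.card = k
  lam_pos : 0 < lam
  pair_blocks : ∀ p q : P, p ≠ q →
    (blocks.filter fun B => p ∈ B ∧ q ∈ B).card = lam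

namespace TwoDesign

variable {P : Type*} [Fintype P] [DecidableEq P] {v k lam : ℕ}

/-- The replication number of the point `p`: the number of blocks through it. -/
def repl (D : TwoDesign P v k lam) (p : P) : ℕ :=
  (D.blocks.filter fun B => p ∈ B).card

/-- Double counting of the pairs `(q, B)` with `q ≠ p` and `p, q ∈ B`. -/
theorem repl_mul (D : TwoDesign P v k lam) (p : P) :
    D.repl p * (k - 1) = lam * (v - 1) := by
  have h := Finset.sum_card_bipartiteAbove_eq_sum_card_bipartiteBelow
    (s := Finset.univ.erase p) (t := D.blocks.filter fun B => p ∈ B)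
    (fun (q : P) (B : Finset P) => q ∈ B)
  have h1 : ∀ q ∈ Finset.univ.erase p, (Finset.bipartiteAbove
      (fun (q : P) (B : Finset P) => q ∈ B) (D.blocks.filter fun B => p ∈ B) q).card = lam := by
    intro q hq
    rw [Finset.bipartiteAbove, Finset.filter_filter]
    exact D.pair_blocks p q (Finset.ne_of_mem_erase hq).symm
  have h2 : ∀ B ∈ D.blocks.filter (fun B => p ∈ B), (Finset.bipartiteBelow
      (fun (q : P) (B : Finset P) => q ∈ B) (Finset.univ.erase p) B).card = k - 1 := by
    intro B hB
    rw [Finset.mem_filter] at hB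
    rw [← D.block_card B hB.1, ← Finset.card_erase_of_mem hB.2]
    congr 1
    ext q
    simp [Finset.bipartiteBelow]
  rw [Finset.sum_congr rfl h1, Finset.sum_congr rfl h2, Finset.sum_const, Finset.sum_const,
    Finset.card_erase_of_mem (Finset.mem_univ p), Finset.card_univ, D.card_points] at h
  simp only [smul_eq_mul] at h
  rw [repl, ← h, mul_comm]

theorem lam_lt_repl (D : TwoDesign P v k lam) (hk : 2 < k) (hkv : k < v) (p : P) :
    lam < D.repl p := by
  have h := D.repl_mul p
  by_contra! hle
  have h1 : D.repl p * (k - 1) ≤ lam * (k - 1) := Nat.mul_le_mul_right _ hle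
  have h2 : lam * (k - 1) < lam * (v - 1) := Nat.mul_lt_mul_of_pos_left (by omega) D.lam_pos
  omega

theorem repl_eq (D : TwoDesign P v k lam) (hk : 2 < k) (p q : P) : D.repl p = D.repl q :=
  Nat.eq_of_mul_eq_mul_right (by omega : 0 < k - 1) ((D.repl_mul p).trans (D.repl_mul q).symm)

/-- Double counting of the flags. -/
theorem card_blocks_mul (D : TwoDesign P v k lam) (hk : 2 < k) (p : P) :
    D.blocks.card * k = v * D.repl p := by
  have h := Finset.sum_card_bipartiteAbove_eq_sum_card_bipartiteBelow
    (s := Finset.univ) (t := D.blocks) (fun (q : P) (B : Finset P) => q ∈ B)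
  have h1 : ∀ q ∈ Finset.univ, (Finset.bipartiteAbove
      (fun (q : P) (B : Finset P) => q ∈ B) D.blocks q).card = D.repl p := by
    intro q _
    exact D.repl_eq hk q p
  have h2 : ∀ B ∈ D.blocks, (Finset.bipartiteBelow
      (fun (q : P) (B : Finset P) => q ∈ B) Finset.univ B).card = k := by
    intro B hB
    rw [← D.block_card B hB]
    congr 1
    ext q
    simp [Finset.bipartiteBelow]
  rw [Finset.sum_congr rfl h1, Finset.sum_congr rfl h2, Finset.sum_const, Finset.sum_const,
    Finset.card_univ, D.card_points] at h
  simpa using h.symm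

/-- Summing the block sums of a weighting `c` over the blocks through `q` counts `c q` with
multiplicity `r` and every other weight with multiplicity `λ`. -/
theorem sum_block_sums (D : TwoDesign P v k lam) (c : P → ℚ) (q : P) :
    ∑ B ∈ D.blocks.filter (fun B => q ∈ B), ∑ p ∈ B, c p
      = lam * ∑ p, c p + ((D.repl q : ℚ) - lam) * c q := by
  have h1 : ∑ B ∈ D.blocks.filter (fun B => q ∈ B), ∑ p ∈ B, c p
      = ∑ p, ((D.blocks.filter fun B => q ∈ B ∧ p ∈ B).card : ℚ) * c p := by
    rw [Finset.sum_comm' (t' := Finset.univ)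
      (s' := fun p => D.blocks.filter fun B => q ∈ B ∧ p ∈ B)]
    · simp
    · intro B p
      simp [and_assoc]
  rw [h1, ← Finset.add_sum_erase _ _ (Finset.mem_univ q),
    ← Finset.add_sum_erase Finset.univ c (Finset.mem_univ q)]
  have h2 : ∑ p ∈ Finset.univ.erase q, ((D.blocks.filter fun B => q ∈ B ∧ p ∈ B).card : ℚ) * c p
      = lam * ∑ p ∈ Finset.univ.erase q, c p := by
    rw [Finset.mul_sum]
    refine Finset.sum_congr rfl fun p hp => ?_
    rw [D.pair_blocks q p (Finset.ne_of_mem_erase hp).symm]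
  rw [h2]
  simp only [and_self]
  rw [repl]
  ring

/-- Fisher's inequality: there are at least as many blocks as points. -/
theorem card_points_le_card_blocks (D : TwoDesign P v k lam) (hk : 2 < k) (hkv : k < v) :
    v ≤ D.blocks.card := by
  let f : (P → ℚ) →ₗ[ℚ] (D.blocks → ℚ) :=
    { toFun := fun c B => ∑ p ∈ B.1, c p
      map_add' := fun c d => by ext B; simp [Finset.sum_add_distrib]
      map_smul' := fun a c => by ext B; simp [Finset.mul_sum] }
  have hf : Function.Injective f := by
    rw [← LinearMap.ker_eq_bot, LinearMap.ker_eq_bot']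
    intro c hc
    have hB : ∀ B ∈ D.blocks, ∑ p ∈ B, c p = 0 := fun B hB => congrFun hc ⟨B, hB⟩
    have hq : ∀ q, lam * ∑ p, c p + ((D.repl q : ℚ) - lam) * c q = 0 := by
      intro q
      rw [← D.sum_block_sums c q]
      exact Finset.sum_eq_zero fun B h => hB B (Finset.mem_filter.1 h).1
    ext q
    have hlt : ∀ q, (lam : ℚ) < D.repl q := fun q => by
      exact_mod_cast D.lam_lt_repl hk hkv q
    -- The relations `hq` force `c` to be constant, and a block sum of `c` is then `k * c q`.
    have hconst : ∀ p, c p = c q := by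
      intro p
      have h1 := hq p
      have h2 := hq q
      rw [D.repl_eq hk p q] at h1
      have h3 : ((D.repl q : ℚ) - lam) ≠ 0 := (sub_pos.2 (hlt q)).ne'
      exact mul_left_cancel₀ h3 (by linarith)
    obtain ⟨B, hBm⟩ := Finset.card_pos.1 (lt_of_le_of_lt (Nat.zero_le _) (D.lam_lt_repl hk hkv q))
    have hBb := (Finset.mem_filter.1 hBm).1
    have h0 := hB B hBb
    rw [Finset.sum_congr rfl fun p _ => hconst p, Finset.sum_const, D.block_card B hBb,
      nsmul_eq_mul, mul_eq_zero] at h0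
    rcases h0 with h0 | h0
    · have : k = 0 := by exact_mod_cast h0
      omega
    · exact h0
  have h := LinearMap.finrank_le_finrank_of_injective hf
  rw [Module.finrank_fintype_fun_eq_card, Module.finrank_fintype_fun_eq_card, D.card_points,
    Fintype.card_coe] at h
  exact h

theorem lam_mul_lt_repl_sq (D : TwoDesign P v k lam) (hk : 2 < k) (hkv : k < v) (p : P) :
    lam * v < D.repl p ^ 2 := by
  have hlt := D.lam_lt_repl hk hkv p
  have hkr : k ≤ D.repl p := by
    have h1 := D.card_blocks_mul hk p
    have h2 := Nat.mul_le_mul_right k (D.card_points_le_card_blocks hk hkv)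
    exact Nat.le_of_mul_le_mul_left (h2.trans h1.le) (by omega)
  have h := D.repl_mul p
  obtain ⟨w, rfl⟩ : ∃ w, v = w + 1 := ⟨v - 1, by omega⟩
  obtain ⟨j, rfl⟩ : ∃ j, k = j + 1 := ⟨k - 1, by omega⟩
  simp only [Nat.add_sub_cancel] at h
  nlinarith [Nat.mul_le_mul_left (D.repl p) hkr]

end TwoDesign

/-- If `G` is a flag-transitive group of automorphisms of a non-trivial
2-(v,k,λ) design, then `|G_α|³ > λ·|G|` for every point `α`. -/
theorem stmt_2 {P : Type*} [Fintype P] [DecidableEq P] {v k lam : ℕ}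
    (D : TwoDesign P v k lam)
    (hnt : 2 < k ∧ k < v - 1)
    (G : Type*) [Group G] [Fintype G] [MulAction G P]
    (hact : ∀ (g : G), ∀ B ∈ D.blocks, B.image (fun p => g • p) ∈ D.blocks)
    (hflag : ∀ (p₁ p₂ : P) (B₁ B₂ : Finset P), B₁ ∈ D.blocks → B₂ ∈ D.blocks →
      p₁ ∈ B₁ → p₂ ∈ B₂ → ∃ g : G, g • p₁ = p₂ ∧ B₁.image (fun p => g • p) = B₂)
    (α : P) :
    lam * Nat.card G < (Nat.card (MulAction.stabilizer G α)) ^ 3 := by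
  have hkv : k < v := by omega
  have key := D.lam_mul_lt_repl_sq hnt.1 hkv α
  have hr : D.repl α ≤ Nat.card (MulAction.stabilizer G α) := by
    obtain ⟨B₀, hB₀⟩ := Finset.card_pos.1
      (lt_of_le_of_lt (Nat.zero_le _) (D.lam_lt_repl hnt.1 hkv α))
    rw [Finset.mem_filter] at hB₀
    have hex : ∀ B : {B // B ∈ D.blocks.filter fun B => α ∈ B},
        ∃ g : MulAction.stabilizer G α, B₀.image (fun p => (g : G) • p) = B.1 := by
      rintro ⟨B, hB⟩
      rw [Finset.mem_filter] at hB
      obtain ⟨g, hg, hgB⟩ := hflag α α B₀ B hB₀.1 hB.1 hB₀.2 hB.2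
      exact ⟨⟨g, hg⟩, hgB⟩
    choose f hf using hex
    have hinj : Function.Injective f := by
      intro B C hBC
      apply Subtype.ext
      rw [← hf B, ← hf C, hBC]
    have h := Nat.card_le_card_of_injective f hinj
    rwa [Nat.card_eq_fintype_card, Fintype.card_coe] at h
  have hG : Nat.card G ≤ v * Nat.card (MulAction.stabilizer G α) := by
    have h := Nat.card_congr (MulAction.orbitProdStabilizerEquivGroup G α)
    rw [Nat.card_prod] at h
    rw [← h, ← D.card_points, ← Nat.card_eq_fintype_card]
    exact Nat.mul_le_mul_right _ (Nat.card_le_card_of_injective _ Subtype.val_injective)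
  have hpos : 0 < Nat.card (MulAction.stabilizer G α) := Nat.card_pos
  calc lam * Nat.card G ≤ lam * (v * Nat.card (MulAction.stabilizer G α)) :=
        Nat.mul_le_mul_left _ hG
    _ = lam * v * Nat.card (MulAction.stabilizer G α) := by ring
    _ < D.repl α ^ 2 * Nat.card (MulAction.stabilizer G α) := Nat.mul_lt_mul_of_pos_right key hpos
    _ ≤ Nat.card (MulAction.stabilizer G α) ^ 2 * Nat.card (MulAction.stabilizer G α) :=
        Nat.mul_le_mul_right _ (Nat.pow_le_pow_left hr 2)
    _ = Nat.card (MulAction.stabilizer G α) ^ 3 := by ring
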